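/- arXiv:math/0107122 — 7 statements merged into one kernel-verified Lean document; each statement's English description precedes it below -/
import Mathlib

section
/- Fix an open set U ⊆ ℝ² with coordinates (R¹,R²) and smooth functions a, b : U → ℝ. Call a pair (G¹¹, G²²) of smooth positive functions on U admissible (for a,b) if it satisfies ∂₂G¹¹ = −2aG¹¹, ∂₁G²² = −2bG²², and the constant-curvature-one condition (∂₂a + a²)G²² + (a/2)∂₂G²² + (∂₁b + b²)G¹¹ + (b/2)∂₁G¹¹ + 1 = 0. Then if (G¹¹, G²²) and (G̃¹¹, G̃²²) are both admissible and λ ∈ ℝ is such that λG¹¹ + (1−λ)G̃¹¹ and λG²² + (1−λ)G̃²² are positive on U, the pair (λG¹¹ + (1−λ)G̃¹¹, λG²² + (1−λ)G̃²²) is also admissible. Consequently, S-deformations of a surface occur in families parametrized affinely. -/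
/-!
For fixed `a` and `b` all three equations are linear in the pair `(G¹¹, G²²)` and its first
derivatives. The first two are homogeneous, so every linear combination of solutions solves them.
The third has the constant term `1`, which a combination `c • (G¹¹, G²²) + d • (G̃¹¹, G̃²²)`
turns into `c + d`; it is preserved because the weights `λ` and `1 - λ` sum to one.
-/

/-- First partial derivative `∂₁ = ∂/∂R¹` of a function on `ℝ²`. -/
noncomputable def pd1 (f : ℝ × ℝ → ℝ) (p : ℝ × ℝ) : ℝ := fderiv ℝ f p (1, 0)

/-- Second partial derivative `∂₂ = ∂/∂R²` of a function on `ℝ²`. -/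
noncomputable def pd2 (f : ℝ × ℝ → ℝ) (p : ℝ × ℝ) : ℝ := fderiv ℝ f p (0, 1)

/-- A pair `(G11, G22)` of inverse metric coefficients is admissible for the
coefficients `a`, `b` on `U`: both are smooth and positive on `U`, satisfy
`∂₂G¹¹ = −2aG¹¹`, `∂₁G²² = −2bG²²`, and the constant-curvature-one condition. -/
def Admissible (U : Set (ℝ × ℝ)) (a b G11 G22 : ℝ × ℝ → ℝ) : Prop :=
  ContDiffOn ℝ (⊤ : ℕ∞) G11 U ∧ ContDiffOn ℝ (⊤ : ℕ∞) G22 U ∧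
  (∀ p ∈ U, 0 < G11 p) ∧ (∀ p ∈ U, 0 < G22 p) ∧
  (∀ p ∈ U, pd2 G11 p = -2 * a p * G11 p) ∧
  (∀ p ∈ U, pd1 G22 p = -2 * b p * G22 p) ∧
  (∀ p ∈ U,
    (pd2 a p + a p ^ 2) * G22 p + a p / 2 * pd2 G22 p +
      (pd1 b p + b p ^ 2) * G11 p + b p / 2 * pd1 G11 p + 1 = 0)

section LinearCombination

theorem fderiv_const_smul_add_const_smul_apply {𝕜 E F : Type*} [NontriviallyNormedField 𝕜]
    [NormedAddCommGroup E] [NormedSpace 𝕜 E] [NormedAddCommGroup F] [NormedSpace 𝕜 F]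
    {f g : E → F} {x : E} (hf : DifferentiableAt 𝕜 f x) (hg : DifferentiableAt 𝕜 g x)
    (c d : 𝕜) (v : E) :
    fderiv 𝕜 (fun y => c • f y + d • g y) x v = c • fderiv 𝕜 f x v + d • fderiv 𝕜 g x v :=
  DFunLike.congr_fun ((hf.hasFDerivAt.const_smul c).add (hg.hasFDerivAt.const_smul d)).fderiv v

variable {f g : ℝ × ℝ → ℝ} {p : ℝ × ℝ}

theorem pd1_const_mul_add_const_mul (hf : DifferentiableAt ℝ f p) (hg : DifferentiableAt ℝ g p)
    (c d : ℝ) : pd1 (fun q => c * f q + d * g q) p = c * pd1 f p + d * pd1 g p :=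
  fderiv_const_smul_add_const_smul_apply hf hg c d (1, 0)

theorem pd2_const_mul_add_const_mul (hf : DifferentiableAt ℝ f p) (hg : DifferentiableAt ℝ g p)
    (c d : ℝ) : pd2 (fun q => c * f q + d * g q) p = c * pd2 f p + d * pd2 g p :=
  fderiv_const_smul_add_const_smul_apply hf hg c d (0, 1)

end LinearCombination

/-- The homogeneous linear part of the constant-curvature-one condition, as an operator on the
pair `(G11, G22)`: the condition itself reads `curvatureOperator a b G11 G22 p + 1 = 0`. -/
noncomputable def curvatureOperator (a b G11 G22 : ℝ × ℝ → ℝ) (p : ℝ × ℝ) : ℝ :=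
  (pd2 a p + a p ^ 2) * G22 p + a p / 2 * pd2 G22 p +
    (pd1 b p + b p ^ 2) * G11 p + b p / 2 * pd1 G11 p

theorem curvatureOperator_const_mul_add_const_mul {G11 G22 G11' G22' : ℝ × ℝ → ℝ} {p : ℝ × ℝ}
    (h11 : DifferentiableAt ℝ G11 p) (h22 : DifferentiableAt ℝ G22 p)
    (h11' : DifferentiableAt ℝ G11' p) (h22' : DifferentiableAt ℝ G22' p)
    (a b : ℝ × ℝ → ℝ) (c d : ℝ) :
    curvatureOperator a b (fun q => c * G11 q + d * G11' q) (fun q => c * G22 q + d * G22' q) p =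
      c * curvatureOperator a b G11 G22 p + d * curvatureOperator a b G11' G22' p := by
  simp only [curvatureOperator, pd1_const_mul_add_const_mul h11 h11',
    pd2_const_mul_add_const_mul h22 h22']
  ring

namespace Admissible

variable {U : Set (ℝ × ℝ)} {a b G11 G22 : ℝ × ℝ → ℝ} {p : ℝ × ℝ}

theorem differentiableAt_left (h : Admissible U a b G11 G22) (hU : IsOpen U) (hp : p ∈ U) :
    DifferentiableAt ℝ G11 p :=
  (h.1.differentiableOn (by simp)).differentiableAt (hU.mem_nhds hp)

theorem differentiableAt_right (h : Admissible U a b G11 G22) (hU : IsOpen U) (hp : p ∈ U) :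
    DifferentiableAt ℝ G22 p :=
  (h.2.1.differentiableOn (by simp)).differentiableAt (hU.mem_nhds hp)

theorem curvatureOperator_eq_neg_one (h : Admissible U a b G11 G22) (hp : p ∈ U) :
    curvatureOperator a b G11 G22 p = -1 :=
  have ⟨_, _, _, _, _, _, curvature⟩ := h
  eq_neg_of_add_eq_zero_left (curvature p hp)

end Admissible

/-- Affine combinations of admissible pairs (for fixed `a`, `b`) which remain
positive are again admissible: S-deformations occur in affine families. -/
theorem affine_combination_admissible
    (U : Set (ℝ × ℝ)) (hU : IsOpen U) (a b : ℝ × ℝ → ℝ)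
    (ha : ContDiffOn ℝ (⊤ : ℕ∞) a U) (hb : ContDiffOn ℝ (⊤ : ℕ∞) b U)
    (G11 G22 G11' G22' : ℝ × ℝ → ℝ)
    (h1 : Admissible U a b G11 G22) (h2 : Admissible U a b G11' G22')
    (lam : ℝ)
    (hpos1 : ∀ p ∈ U, 0 < lam * G11 p + (1 - lam) * G11' p)
    (hpos2 : ∀ p ∈ U, 0 < lam * G22 p + (1 - lam) * G22' p) :
    Admissible U a b (fun p => lam * G11 p + (1 - lam) * G11' p)
      (fun p => lam * G22 p + (1 - lam) * G22' p) := by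
  have ⟨smooth11, smooth22, _, _, eq11, eq22, _⟩ := h1
  have ⟨smooth11', smooth22', _, _, eq11', eq22', _⟩ := h2
  refine ⟨(contDiffOn_const.mul smooth11).add (contDiffOn_const.mul smooth11'),
    (contDiffOn_const.mul smooth22).add (contDiffOn_const.mul smooth22'), hpos1, hpos2,
    fun p hp => ?_, fun p hp => ?_, fun p hp => eq_neg_iff_add_eq_zero.mp ?curvature⟩
  · rw [pd2_const_mul_add_const_mul (h1.differentiableAt_left hU hp)
      (h2.differentiableAt_left hU hp), eq11 p hp, eq11' p hp]
    ring
  · rw [pd1_const_mul_add_const_mul (h1.differentiableAt_right hU hp)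
      (h2.differentiableAt_right hU hp), eq22 p hp, eq22' p hp]
    ring
  case curvature =>
    refine (curvatureOperator_const_mul_add_const_mul
      (h1.differentiableAt_left hU hp) (h1.differentiableAt_right hU hp)
      (h2.differentiableAt_left hU hp) (h2.differentiableAt_right hU hp) a b lam (1 - lam)).trans ?_
    rw [h1.curvatureOperator_eq_neg_one hp, h2.curvatureOperator_eq_neg_one hp]
    ring
end

section
/- Let c ∈ ℝ and let ψ be a smooth positive function of R². On the open set U ⊆ ℝ² where cos R¹ ≠ 0, sin R¹ ≠ 0 and 1 + c/cos²R¹ > 0, consider the Monge moulding metric with inverse coefficients G¹¹ = 1 + c/cos²(R¹) and G²² = ψ(R²)/sin²(R¹). Then: (i) the coefficients defined by ∂₂G¹¹ = −2aG¹¹ and ∂₁G²² = −2bG²² are a = 0 and b = cot(R¹), independent of c and ψ; and (ii) the constant-curvature-one condition (∂₂a + a²)G²² + (a/2)∂₂G²² + (∂₁b + b²)G¹¹ + (b/2)∂₁G¹¹ + 1 = 0 holds on U for every c and ψ. -/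
open Real

/-!
For a metric `(dx)² / g(x) + s(x)² (dy)² / ψ(y)` the coefficients are `a = 0` and `b = s' / s`. The
factor `ψ` drops out of the curvature condition, which becomes a linear first-order equation for `g`
with integrating factor `2 s s'`: it says that `s'² g + s²` is constant. For `s = sin` and
`g = 1 + c / cos²` this constant is `1 + c`.
-/

section PartialDerivatives

variable {f h : ℝ → ℝ} {f' : ℝ} {p : ℝ × ℝ}

theorem hasFDerivAt_comp_fst (hf : HasDerivAt f f' p.1) :
    HasFDerivAt (fun q : ℝ × ℝ => f q.1) (f' • ContinuousLinearMap.fst ℝ ℝ ℝ) p :=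
  hf.comp_hasFDerivAt p hasFDerivAt_fst

theorem hasFDerivAt_comp_snd (hf : HasDerivAt f f' p.2) :
    HasFDerivAt (fun q : ℝ × ℝ => f q.2) (f' • ContinuousLinearMap.snd ℝ ℝ ℝ) p :=
  hf.comp_hasFDerivAt p hasFDerivAt_snd

theorem pd1_comp_fst (hf : HasDerivAt f f' p.1) : pd1 (fun q => f q.1) p = f' := by
  simp [pd1, (hasFDerivAt_comp_fst hf).fderiv]

theorem pd2_comp_fst (hf : DifferentiableAt ℝ f p.1) : pd2 (fun q => f q.1) p = 0 := by
  simp [pd2, (hasFDerivAt_comp_fst hf.hasDerivAt).fderiv]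

theorem pd1_comp_snd_mul_comp_fst (hh : DifferentiableAt ℝ h p.2) (hf : HasDerivAt f f' p.1) :
    pd1 (fun q => h q.2 * f q.1) p = h p.2 * f' := by
  simp [pd1,
    ((hasFDerivAt_comp_snd hh.hasDerivAt).fun_mul (hasFDerivAt_comp_fst hf)).fderiv]

end PartialDerivatives

section Profile

variable {s s₁ g ψ : ℝ → ℝ} {s' s₂ g' x : ℝ} {p : ℝ × ℝ}

theorem hasDerivAt_inv_sq (hs : HasDerivAt s s' x) (hs0 : s x ≠ 0) :
    HasDerivAt (fun t => (s t ^ 2)⁻¹) (-2 * (s' / s x) * (s x ^ 2)⁻¹) x := by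
  refine ((hs.fun_pow 2).fun_inv (pow_ne_zero 2 hs0)).congr_deriv ?_
  field_simp
  push_cast
  ring

theorem pd1_div_sq (hs : HasDerivAt s s' p.1) (hs0 : s p.1 ≠ 0)
    (hψ : DifferentiableAt ℝ ψ p.2) :
    pd1 (fun q => ψ q.2 / s q.1 ^ 2) p = -2 * (s' / s p.1) * (ψ p.2 / s p.1 ^ 2) := by
  simp only [div_eq_mul_inv (ψ _)]
  rw [pd1_comp_snd_mul_comp_fst hψ (hasDerivAt_inv_sq hs hs0)]
  ring

theorem hasDerivAt_logarithmic_derivative (hs : HasDerivAt s (s₁ x) x) (hs₁ : HasDerivAt s₁ s₂ x)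
    (hs0 : s x ≠ 0) :
    HasDerivAt (fun t => s₁ t / s t) (s₂ / s x - (s₁ x / s x) ^ 2) x := by
  refine (hs₁.fun_div hs hs0).congr_deriv ?_
  field_simp

theorem hasDerivAt_first_integral (hs : HasDerivAt s (s₁ x) x) (hs₁ : HasDerivAt s₁ s₂ x)
    (hg : HasDerivAt g g' x) (hs0 : s x ≠ 0) :
    HasDerivAt (fun t => s₁ t ^ 2 * g t + s t ^ 2)
      (2 * s x * s₁ x * (s₂ / s x * g x + s₁ x / s x / 2 * g' + 1)) x := by
  refine (((hs₁.fun_pow 2).fun_mul hg).fun_add (hs.fun_pow 2)).congr_deriv ?_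
  field_simp
  push_cast
  ring

theorem curvature_eq_one_of_first_integral (hs : HasDerivAt s (s₁ p.1) p.1)
    (hs₁ : HasDerivAt s₁ s₂ p.1) (hg : DifferentiableAt ℝ g p.1)
    (hs0 : s p.1 ≠ 0) (hs₁0 : s₁ p.1 ≠ 0)
    (hconst : HasDerivAt (fun t => s₁ t ^ 2 * g t + s t ^ 2) 0 p.1) :
    (pd1 (fun q => s₁ q.1 / s q.1) p + (s₁ p.1 / s p.1) ^ 2) * g p.1 +
      s₁ p.1 / s p.1 / 2 * pd1 (fun q => g q.1) p + 1 = 0 := by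
  rw [pd1_comp_fst (hasDerivAt_logarithmic_derivative hs hs₁ hs0), pd1_comp_fst hg.hasDerivAt,
    sub_add_cancel]
  have hzero := (hasDerivAt_first_integral hs hs₁ hg.hasDerivAt hs0).unique hconst
  exact (mul_eq_zero.mp hzero).resolve_left (mul_ne_zero (mul_ne_zero two_ne_zero hs0) hs₁0)

end Profile

section Monge

variable {x : ℝ} (c : ℝ)

theorem differentiableAt_one_add_div_cos_sq (hcos : cos x ≠ 0) :
    DifferentiableAt ℝ (fun t => 1 + c / cos t ^ 2) x := by
  fun_prop (disch := exact pow_ne_zero 2 hcos)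

theorem hasDerivAt_monge_first_integral (hcos : cos x ≠ 0) :
    HasDerivAt (fun t => cos t ^ 2 * (1 + c / cos t ^ 2) + sin t ^ 2) 0 x := by
  refine (hasDerivAt_const x (1 + c)).congr_of_eventuallyEq ?_
  filter_upwards [continuous_cos.continuousAt.eventually_ne hcos] with t ht
  rw [mul_add, mul_one, mul_div_cancel₀ c (pow_ne_zero 2 ht), add_right_comm,
    cos_sq_add_sin_sq]

theorem monge_moulding_general (ψ : ℝ → ℝ) (G11 G22 A B : ℝ × ℝ → ℝ)
    (hG11 : ∀ p : ℝ × ℝ, G11 p = 1 + c / cos p.1 ^ 2)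
    (hG22 : ∀ p : ℝ × ℝ, G22 p = ψ p.2 / sin p.1 ^ 2)
    (hA : ∀ p : ℝ × ℝ, A p = 0)
    (hB : ∀ p : ℝ × ℝ, B p = cos p.1 / sin p.1)
    (p : ℝ × ℝ) (hψ : DifferentiableAt ℝ ψ p.2) (hcos : cos p.1 ≠ 0) (hsin : sin p.1 ≠ 0) :
    (pd2 G11 p = -2 * A p * G11 p ∧ pd1 G22 p = -2 * B p * G22 p) ∧
      (pd2 A p + A p ^ 2) * G22 p + A p / 2 * pd2 G22 p +
        (pd1 B p + B p ^ 2) * G11 p + B p / 2 * pd1 G11 p + 1 = 0 := by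
  obtain rfl : G11 = fun p => 1 + c / cos p.1 ^ 2 := funext hG11
  obtain rfl : G22 = fun p => ψ p.2 / sin p.1 ^ 2 := funext hG22
  obtain rfl : A = fun _ => 0 := funext hA
  obtain rfl : B = fun p => cos p.1 / sin p.1 := funext hB
  have hg := differentiableAt_one_add_div_cos_sq c hcos
  have hpd2A : pd2 (fun _ => 0) p = 0 := pd2_comp_fst (differentiableAt_const 0)
  have hcurv := curvature_eq_one_of_first_integral (hasDerivAt_sin p.1) (hasDerivAt_cos p.1) hg
    hsin hcos (hasDerivAt_monge_first_integral c hcos)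
  refine ⟨⟨?_, pd1_div_sq (hasDerivAt_sin p.1) hsin hψ⟩, ?_⟩
  · rw [pd2_comp_fst hg, mul_zero, zero_mul]
  · linear_combination hcurv + (ψ p.2 / sin p.1 ^ 2) * hpd2A

end Monge

/-- For the Monge moulding metric with `G¹¹ = 1 + c/cos²R¹`, `G²² = ψ(R²)/sin²R¹`:
(i) the Christoffel coefficients are `a = 0`, `b = cot R¹`, independent of `c, ψ`;
(ii) the constant-curvature-one condition holds for all `c, ψ`. -/
theorem monge_moulding (c : ℝ) (ψ : ℝ → ℝ)
    (hψ : ContDiff ℝ (⊤ : ℕ∞) ψ) (hψpos : ∀ t, 0 < ψ t)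
    (U : Set (ℝ × ℝ))
    (hUdef : U = {p : ℝ × ℝ |
      Real.cos p.1 ≠ 0 ∧ Real.sin p.1 ≠ 0 ∧ 0 < 1 + c / Real.cos p.1 ^ 2})
    (G11 G22 A B : ℝ × ℝ → ℝ)
    (hG11 : ∀ p : ℝ × ℝ, G11 p = 1 + c / Real.cos p.1 ^ 2)
    (hG22 : ∀ p : ℝ × ℝ, G22 p = ψ p.2 / Real.sin p.1 ^ 2)
    (hA : ∀ p : ℝ × ℝ, A p = 0)
    (hB : ∀ p : ℝ × ℝ, B p = Real.cos p.1 / Real.sin p.1) :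
    (∀ p ∈ U, pd2 G11 p = -2 * A p * G11 p ∧ pd1 G22 p = -2 * B p * G22 p) ∧
    (∀ p ∈ U,
      (pd2 A p + A p ^ 2) * G22 p + A p / 2 * pd2 G22 p +
        (pd1 B p + B p ^ 2) * G11 p + B p / 2 * pd1 G11 p + 1 = 0) := by
  subst hUdef
  exact forall₂_and.mp fun p ⟨hcos, hsin, _⟩ => monge_moulding_general c ψ G11 G22 A B
    hG11 hG22 hA hB p (hψ.differentiable (by simp) p.2) hcos hsin
end

section
/- Let φ and ψ be smooth functions of R² with ψ > 0. On the open set U ⊆ ℝ² where sin(R¹ + φ(R²)) ≠ 0, consider the general moulding metric with inverse coefficients G¹¹ = 1 and G²² = ψ(R²)/sin²(R¹ + φ(R²)). Then: (i) the coefficients defined by ∂₂G¹¹ = −2aG¹¹ and ∂₁G²² = −2bG²² are a = 0 and b = cot(R¹ + φ(R²)), independent of ψ; and (ii) the constant-curvature-one condition (∂₂a + a²)G²² + (a/2)∂₂G²² + (∂₁b + b²)G¹¹ + (b/2)∂₁G¹¹ + 1 = 0 holds on U for every ψ. -/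
/-!
In the coordinates `(R¹, R²)` the metric is `(dR¹)² + (s² / ψ(R²)) (dR²)²` with
`s = sin (R¹ + φ(R²))`, so the curves `R² = const` are unit-speed geodesics. As the factor `ψ(R²)`
is constant along them, `b` is the logarithmic derivative `∂₁s / s`, whatever `ψ` is, and the
curvature condition becomes the Riccati equation `∂₁b + b² = -1`. It is equivalent to the Jacobi
equation `∂₁²s = -s`, which the sine satisfies.
-/

section PartialDerivative

variable {f g s c : ℝ × ℝ → ℝ} {p : ℝ × ℝ}

lemma hasDerivAt_pd1 (hf : DifferentiableAt ℝ f p) :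
    HasDerivAt (fun t ↦ f (t, p.2)) (pd1 f p) p.1 := by
  have hline : HasDerivAt (fun t : ℝ ↦ (t, p.2)) ((1 : ℝ), (0 : ℝ)) p.1 :=
    (hasDerivAt_id p.1).prodMk (hasDerivAt_const p.1 p.2)
  exact HasFDerivAt.comp_hasDerivAt p.1 (l := f) hf.hasFDerivAt hline

lemma pd1_div (hf : DifferentiableAt ℝ f p) (hg : DifferentiableAt ℝ g p) (hgp : g p ≠ 0) :
    pd1 (fun q ↦ f q / g q) p = (pd1 f p * g p - f p * pd1 g p) / g p ^ 2 := by
  have hfg : DifferentiableAt ℝ (fun q ↦ f q / g q) p := by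
    simpa only [div_eq_mul_inv] using hf.fun_mul (hg.fun_inv hgp)
  exact (hasDerivAt_pd1 hfg).unique ((hasDerivAt_pd1 hf).fun_div (hasDerivAt_pd1 hg) hgp)

lemma pd1_sq (hf : DifferentiableAt ℝ f p) :
    pd1 (fun q ↦ f q ^ 2) p = 2 * f p * pd1 f p := by
  simp [pd1, fderiv_fun_pow 2 hf]

lemma pd1_div_sq_of_pd1_eq_zero (hf : DifferentiableAt ℝ f p) (hs : DifferentiableAt ℝ s p)
    (hsp : s p ≠ 0) (hf₁ : pd1 f p = 0) :
    pd1 (fun q ↦ f q / s q ^ 2) p = -2 * (pd1 s p / s p) * (f p / s p ^ 2) := by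
  rw [pd1_div hf (hs.fun_pow 2) (pow_ne_zero 2 hsp), pd1_sq hs, hf₁]
  field_simp
  ring

lemma pd1_div_add_sq_of_pd1_eq (hs : DifferentiableAt ℝ s p) (hc : DifferentiableAt ℝ c p)
    (hsp : s p ≠ 0) (hs₁ : pd1 s p = c p) :
    pd1 (fun q ↦ c q / s q) p + (c p / s p) ^ 2 = pd1 c p / s p := by
  rw [pd1_div hc hs hsp, hs₁]
  field_simp
  ring

end PartialDerivative

section Moulding

variable {φ ψ F : ℝ → ℝ} {F' : ℝ} {p : ℝ × ℝ}

lemma pd1_comp_snd (hψ : DifferentiableAt ℝ ψ p.2) : pd1 (fun q ↦ ψ q.2) p = 0 :=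
  (hasDerivAt_pd1 (by fun_prop)).unique (hasDerivAt_const p.1 (ψ p.2))

lemma pd1_comp_fst_add (hφ : DifferentiableAt ℝ φ p.2) (hF : HasDerivAt F F' (p.1 + φ p.2)) :
    pd1 (fun q ↦ F (q.1 + φ q.2)) p = F' := by
  have hFφ : DifferentiableAt ℝ (fun q : ℝ × ℝ ↦ F (q.1 + φ q.2)) p :=
    DifferentiableAt.fun_comp' p hF.differentiableAt (by fun_prop)
  exact (hasDerivAt_pd1 hFφ).unique (hF.comp_add_const p.1 (φ p.2))

lemma pd1_div_sin_sq (hφ : DifferentiableAt ℝ φ p.2) (hψ : DifferentiableAt ℝ ψ p.2)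
    (hp : Real.sin (p.1 + φ p.2) ≠ 0) :
    pd1 (fun q ↦ ψ q.2 / Real.sin (q.1 + φ q.2) ^ 2) p =
      -2 * (Real.cos (p.1 + φ p.2) / Real.sin (p.1 + φ p.2)) *
        (ψ p.2 / Real.sin (p.1 + φ p.2) ^ 2) := by
  rw [pd1_div_sq_of_pd1_eq_zero (by fun_prop) (by fun_prop) hp (pd1_comp_snd hψ),
    pd1_comp_fst_add hφ (Real.hasDerivAt_sin _)]

lemma pd1_cos_div_sin_add_sq (hφ : DifferentiableAt ℝ φ p.2)
    (hp : Real.sin (p.1 + φ p.2) ≠ 0) :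
    pd1 (fun q ↦ Real.cos (q.1 + φ q.2) / Real.sin (q.1 + φ q.2)) p +
      (Real.cos (p.1 + φ p.2) / Real.sin (p.1 + φ p.2)) ^ 2 = -1 := by
  rw [pd1_div_add_sq_of_pd1_eq (by fun_prop) (by fun_prop) hp
      (pd1_comp_fst_add hφ (Real.hasDerivAt_sin _)),
    pd1_comp_fst_add hφ (Real.hasDerivAt_cos _), neg_div, div_self hp]

end Moulding

theorem general_moulding_general (φ ψ : ℝ → ℝ)
    (hφ : Differentiable ℝ φ) (hψ : Differentiable ℝ ψ)
    (U : Set (ℝ × ℝ))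
    (hUdef : U = {p : ℝ × ℝ | Real.sin (p.1 + φ p.2) ≠ 0})
    (G11 G22 A B : ℝ × ℝ → ℝ)
    (hG11 : ∀ p : ℝ × ℝ, G11 p = 1)
    (hG22 : ∀ p : ℝ × ℝ, G22 p = ψ p.2 / Real.sin (p.1 + φ p.2) ^ 2)
    (hA : ∀ p : ℝ × ℝ, A p = 0)
    (hB : ∀ p : ℝ × ℝ, B p = Real.cos (p.1 + φ p.2) / Real.sin (p.1 + φ p.2)) :
    (∀ p ∈ U, pd2 G11 p = -2 * A p * G11 p ∧ pd1 G22 p = -2 * B p * G22 p) ∧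
    (∀ p ∈ U,
      (pd2 A p + A p ^ 2) * G22 p + A p / 2 * pd2 G22 p +
        (pd1 B p + B p ^ 2) * G11 p + B p / 2 * pd1 G11 p + 1 = 0) := by
  obtain rfl : G11 = fun _ ↦ 1 := funext hG11
  obtain rfl : A = fun _ ↦ 0 := funext hA
  obtain rfl := funext hG22
  obtain rfl := funext hB
  subst hUdef
  refine ⟨fun p hp ↦ ⟨by simp [pd2], pd1_div_sin_sq (hφ p.2) (hψ p.2) hp⟩, fun p hp ↦ ?_⟩
  have riccati := pd1_cos_div_sin_add_sq (hφ p.2) hp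
  have hA₂ : pd2 (fun _ ↦ 0) p = 0 := by simp [pd2]
  have hG11₁ : pd1 (fun _ ↦ 1) p = 0 := by simp [pd1]
  rw [riccati, hA₂, hG11₁]
  ring

/-- For the general moulding metric with `G¹¹ = 1`,
`G²² = ψ(R²)/sin²(R¹ + φ(R²))`:
(i) the Christoffel coefficients are `a = 0`, `b = cot(R¹ + φ(R²))`,
independent of `ψ`;
(ii) the constant-curvature-one condition holds for every `ψ`. -/
theorem general_moulding (φ ψ : ℝ → ℝ)
    (hφ : ContDiff ℝ (⊤ : ℕ∞) φ) (hψ : ContDiff ℝ (⊤ : ℕ∞) ψ) (hψpos : ∀ t, 0 < ψ t)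
    (U : Set (ℝ × ℝ))
    (hUdef : U = {p : ℝ × ℝ | Real.sin (p.1 + φ p.2) ≠ 0})
    (G11 G22 A B : ℝ × ℝ → ℝ)
    (hG11 : ∀ p : ℝ × ℝ, G11 p = 1)
    (hG22 : ∀ p : ℝ × ℝ, G22 p = ψ p.2 / Real.sin (p.1 + φ p.2) ^ 2)
    (hA : ∀ p : ℝ × ℝ, A p = 0)
    (hB : ∀ p : ℝ × ℝ, B p = Real.cos (p.1 + φ p.2) / Real.sin (p.1 + φ p.2)) :
    (∀ p ∈ U, pd2 G11 p = -2 * A p * G11 p ∧ pd1 G22 p = -2 * B p * G22 p) ∧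
    (∀ p ∈ U,
      (pd2 A p + A p ^ 2) * G22 p + A p / 2 * pd2 G22 p +
        (pd1 B p + B p ^ 2) * G11 p + B p / 2 * pd1 G11 p + 1 = 0) := by
  exact general_moulding_general φ ψ (hφ.differentiable (by simp)) (hψ.differentiable (by simp))
    U hUdef G11 G22 A B hG11 hG22 hA hB
end

section
/- Let a, b, c ∈ ℝ and set Q₁(t) = at² + bt + c, Q₂(t) = at² + bt + c + 1. On an open set U ⊆ ℝ² where R¹ ≠ R², Q₁(R¹) > 0 and Q₂(R²) < 0, consider the metric with inverse coefficients G¹¹ = (R¹ − R²)²Q₁(R¹) and G²² = −(R¹ − R²)²Q₂(R²). Then: (i) the coefficients defined by ∂₂G¹¹ = −2AG¹¹ and ∂₁G²² = −2BG²² are A = 1/(R¹ − R²) and B = 1/(R² − R¹), independent of a, b, c; (ii) the constant-curvature-one condition (∂₂A + A²)G²² + (A/2)∂₂G²² + (∂₁B + B²)G¹¹ + (B/2)∂₁G¹¹ + 1 = 0 holds on U for all a, b, c; and (iii) the functions k¹ = R², k² = R¹ satisfy (∂₂k¹)/(k² − k¹) = 1/(R¹ − R²) and (∂₁k²)/(k¹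 − k²) = 1/(R² − R¹) on U. -/
/-!
For inverse metric coefficients `G¹¹ = (R¹ − R²)² f(R¹)` and `G²² = −(R¹ − R²)² g(R²)` the Gaussian
curvature is `(R¹ − R²) / 2 * (f'(R¹) + g'(R²)) − (f(R¹) − g(R²))`, which is the error of the
trapezoidal rule for `f'` when `g = f`. That rule is exact for quadratic `f`, so `g = f + K` gives
curvature `K`.
-/

section Derivatives

variable {𝕜 : Type*} [NontriviallyNormedField 𝕜]

theorem hasDerivAt_sub_sq_left (x y : 𝕜) :
    HasDerivAt (fun t => (t - y) ^ 2) (2 * (x - y)) x := by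
  simpa using ((hasDerivAt_id x).sub_const y).fun_pow 2

theorem hasDerivAt_sub_sq_right (x y : 𝕜) :
    HasDerivAt (fun t => (x - t) ^ 2) (-(2 * (x - y))) y := by
  simpa using ((hasDerivAt_id y).const_sub x).fun_pow 2

theorem hasDerivAt_one_div_const_sub {x y : 𝕜} (h : x ≠ y) :
    HasDerivAt (fun t => 1 / (x - t)) (1 / (x - y) ^ 2) y := by
  simpa using ((hasDerivAt_id y).const_sub x).fun_inv (sub_ne_zero.2 h)

theorem hasDerivAt_quadratic (a b c t : 𝕜) :
    HasDerivAt (fun s => a * s ^ 2 + b * s + c) (2 * a * t + b) t := by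
  refine ((((hasDerivAt_id t).fun_pow 2).const_mul a).add
    ((hasDerivAt_id t).const_mul b)).add_const c |>.congr_deriv ?_
  simp only [id_eq]
  ring

end Derivatives

theorem quadratic_sub_quadratic_eq_trapezoid
    {𝕜 : Type*} [Field 𝕜] [NeZero (2 : 𝕜)] (a b c x y : 𝕜) :
    a * x ^ 2 + b * x + c - (a * y ^ 2 + b * y + c) =
      (x - y) / 2 * ((2 * a * x + b) + (2 * a * y + b)) := by
  field_simp
  ring

theorem pd1_eq_of_hasDerivAt {f : ℝ × ℝ → ℝ} {p : ℝ × ℝ} {f' : ℝ} (hf : DifferentiableAt ℝ f p)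
    (h : HasDerivAt (fun t => f (t, p.2)) f' p.1) : pd1 f p = f' :=
  have hline : HasDerivAt (fun t : ℝ => (t, p.2)) ((1 : ℝ), (0 : ℝ)) p.1 :=
    (hasDerivAt_id p.1).prodMk (hasDerivAt_const p.1 p.2)
  (hf.hasFDerivAt.comp_hasDerivAt p.1 hline).unique h

theorem pd2_eq_of_hasDerivAt {f : ℝ × ℝ → ℝ} {p : ℝ × ℝ} {f' : ℝ} (hf : DifferentiableAt ℝ f p)
    (h : HasDerivAt (fun t => f (p.1, t)) f' p.2) : pd2 f p = f' :=
  have hline : HasDerivAt (fun t : ℝ => (p.1, t)) ((0 : ℝ), (1 : ℝ)) p.2 :=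
    (hasDerivAt_const p.2 p.1).prodMk (hasDerivAt_id p.2)
  (hf.hasFDerivAt.comp_hasDerivAt p.2 hline).unique h

theorem pd1_fst (p : ℝ × ℝ) : pd1 Prod.fst p = 1 :=
  pd1_eq_of_hasDerivAt differentiableAt_fst (hasDerivAt_id p.1)

theorem pd2_snd (p : ℝ × ℝ) : pd2 Prod.snd p = 1 :=
  pd2_eq_of_hasDerivAt differentiableAt_snd (hasDerivAt_id p.2)

/-- The Gaussian curvature of a diagonal metric with inverse coefficients `G¹¹`, `G²²`, where
`A` and `B` are its Christoffel symbols `Γ¹₁₂` and `Γ²₁₂`, i.e. `∂₂G¹¹ = −2AG¹¹` and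
`∂₁G²² = −2BG²²`. -/
noncomputable def gaussCurvature (G11 G22 A B : ℝ × ℝ → ℝ) (p : ℝ × ℝ) : ℝ :=
  -((pd2 A p + A p ^ 2) * G22 p + A p / 2 * pd2 G22 p +
    (pd1 B p + B p ^ 2) * G11 p + B p / 2 * pd1 G11 p)

theorem gaussCurvature_eq_iff {G11 G22 A B : ℝ × ℝ → ℝ} {p : ℝ × ℝ} {K : ℝ} :
    gaussCurvature G11 G22 A B p = K ↔
      (pd2 A p + A p ^ 2) * G22 p + A p / 2 * pd2 G22 p +
        (pd1 B p + B p ^ 2) * G11 p + B p / 2 * pd1 G11 p + K = 0 :=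
  neg_eq_iff_add_eq_zero

/-- The inverse coefficient `G¹¹ = (R¹ − R²)² f(R¹)`; for the cyclids of Dupin `f` is quadratic. -/
def cyclidG11 (f : ℝ → ℝ) (p : ℝ × ℝ) : ℝ := (p.1 - p.2) ^ 2 * f p.1

/-- The inverse coefficient `G²² = −(R¹ − R²)² g(R²)`. The sign is kept outside `g` so that the
cyclids of Dupin correspond to `g = f + 1`. -/
def cyclidG22 (g : ℝ → ℝ) (p : ℝ × ℝ) : ℝ := -((p.1 - p.2) ^ 2 * g p.2)

/-- The Christoffel symbol `A = Γ¹₁₂` of the metric with inverse coefficients `cyclidG11 f` and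
`cyclidG22 g`. -/
noncomputable def cyclidA (p : ℝ × ℝ) : ℝ := 1 / (p.1 - p.2)

/-- The Christoffel symbol `B = Γ²₁₂` of the metric with inverse coefficients `cyclidG11 f` and
`cyclidG22 g`. -/
noncomputable def cyclidB (p : ℝ × ℝ) : ℝ := 1 / (p.2 - p.1)

section CyclidMetric

variable {f g : ℝ → ℝ} {p : ℝ × ℝ} {f' g' : ℝ}

theorem differentiableAt_cyclidG11 (hf : DifferentiableAt ℝ f p.1) :
    DifferentiableAt ℝ (cyclidG11 f) p := by
  unfold cyclidG11
  fun_prop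

theorem differentiableAt_cyclidG22 (hg : DifferentiableAt ℝ g p.2) :
    DifferentiableAt ℝ (cyclidG22 g) p := by
  unfold cyclidG22
  fun_prop

theorem pd1_cyclidG11 (hf : HasDerivAt f f' p.1) :
    pd1 (cyclidG11 f) p = 2 * (p.1 - p.2) * f p.1 + (p.1 - p.2) ^ 2 * f' :=
  pd1_eq_of_hasDerivAt (differentiableAt_cyclidG11 hf.differentiableAt)
    ((hasDerivAt_sub_sq_left p.1 p.2).fun_mul hf)

theorem pd2_cyclidG11 (hf : DifferentiableAt ℝ f p.1) :
    pd2 (cyclidG11 f) p = -(2 * (p.1 - p.2)) * f p.1 :=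
  pd2_eq_of_hasDerivAt (differentiableAt_cyclidG11 hf)
    ((hasDerivAt_sub_sq_right p.1 p.2).mul_const (f p.1))

theorem pd1_cyclidG22 (hg : DifferentiableAt ℝ g p.2) :
    pd1 (cyclidG22 g) p = -(2 * (p.1 - p.2) * g p.2) :=
  pd1_eq_of_hasDerivAt (differentiableAt_cyclidG22 hg)
    ((hasDerivAt_sub_sq_left p.1 p.2).mul_const (g p.2)).fun_neg

theorem pd2_cyclidG22 (hg : HasDerivAt g g' p.2) :
    pd2 (cyclidG22 g) p = -(-(2 * (p.1 - p.2)) * g p.2 + (p.1 - p.2) ^ 2 * g') :=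
  pd2_eq_of_hasDerivAt (differentiableAt_cyclidG22 hg.differentiableAt)
    ((hasDerivAt_sub_sq_right p.1 p.2).fun_mul hg).fun_neg

theorem pd2_cyclidA (hp : p.1 ≠ p.2) : pd2 cyclidA p = 1 / (p.1 - p.2) ^ 2 := by
  have hdiff : DifferentiableAt ℝ cyclidA p := by
    unfold cyclidA
    fun_prop (disch := exact sub_ne_zero.2 hp)
  exact pd2_eq_of_hasDerivAt hdiff (hasDerivAt_one_div_const_sub hp)

theorem pd1_cyclidB (hp : p.1 ≠ p.2) : pd1 cyclidB p = 1 / (p.2 - p.1) ^ 2 := by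
  have hdiff : DifferentiableAt ℝ cyclidB p := by
    unfold cyclidB
    fun_prop (disch := exact sub_ne_zero.2 hp.symm)
  exact pd1_eq_of_hasDerivAt hdiff (hasDerivAt_one_div_const_sub hp.symm)

theorem cyclidB_eq_neg_cyclidA (p : ℝ × ℝ) : cyclidB p = -cyclidA p := by
  rw [cyclidA, cyclidB, ← neg_sub p.1 p.2, one_div_neg_eq_neg_one_div]

theorem pd2_cyclidG11_eq_cyclidA_mul (hf : DifferentiableAt ℝ f p.1) (hp : p.1 ≠ p.2) :
    pd2 (cyclidG11 f) p = -2 * cyclidA p * cyclidG11 f p := by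
  have hsub : p.1 - p.2 ≠ 0 := sub_ne_zero.2 hp
  rw [pd2_cyclidG11 hf, cyclidA, cyclidG11]
  field_simp

theorem pd1_cyclidG22_eq_cyclidB_mul (hg : DifferentiableAt ℝ g p.2) (hp : p.1 ≠ p.2) :
    pd1 (cyclidG22 g) p = -2 * cyclidB p * cyclidG22 g p := by
  have hsub : p.1 - p.2 ≠ 0 := sub_ne_zero.2 hp
  rw [pd1_cyclidG22 hg, cyclidB_eq_neg_cyclidA, cyclidA, cyclidG22]
  field_simp

theorem gaussCurvature_cyclid (hf : HasDerivAt f f' p.1) (hg : HasDerivAt g g' p.2)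
    (hp : p.1 ≠ p.2) :
    gaussCurvature (cyclidG11 f) (cyclidG22 g) cyclidA cyclidB p =
      (p.1 - p.2) / 2 * (f' + g') - (f p.1 - g p.2) := by
  have hsub : p.1 - p.2 ≠ 0 := sub_ne_zero.2 hp
  rw [gaussCurvature, pd2_cyclidA hp, pd1_cyclidB hp, pd2_cyclidG22 hg, pd1_cyclidG11 hf,
    cyclidB_eq_neg_cyclidA, cyclidA, cyclidG11, cyclidG22, ← neg_sub p.1 p.2]
  field_simp
  ring

end CyclidMetric

theorem gaussCurvature_cyclid_quadratic (a b c K : ℝ) {p : ℝ × ℝ} (hp : p.1 ≠ p.2) :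
    gaussCurvature (cyclidG11 fun t => a * t ^ 2 + b * t + c)
      (cyclidG22 fun t => a * t ^ 2 + b * t + c + K) cyclidA cyclidB p = K := by
  have hg := (hasDerivAt_quadratic a b c p.2).add_const K
  rw [gaussCurvature_cyclid (hasDerivAt_quadratic a b c p.1) hg hp,
    ← quadratic_sub_quadratic_eq_trapezoid a b c]
  ring

theorem dupin_cyclids_general {a b c K : ℝ} {Q1 Q2 : ℝ → ℝ}
    (hQ1 : ∀ t, Q1 t = a * t ^ 2 + b * t + c)
    (hQ2 : ∀ t, Q2 t = a * t ^ 2 + b * t + c + K)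
    {G11 G22 A B k1 k2 : ℝ × ℝ → ℝ}
    (hG11 : ∀ p : ℝ × ℝ, G11 p = (p.1 - p.2) ^ 2 * Q1 p.1)
    (hG22 : ∀ p : ℝ × ℝ, G22 p = -((p.1 - p.2) ^ 2 * Q2 p.2))
    (hA : ∀ p : ℝ × ℝ, A p = 1 / (p.1 - p.2))
    (hB : ∀ p : ℝ × ℝ, B p = 1 / (p.2 - p.1))
    (hk1 : ∀ p : ℝ × ℝ, k1 p = p.2)
    (hk2 : ∀ p : ℝ × ℝ, k2 p = p.1)
    {p : ℝ × ℝ} (hp : p.1 ≠ p.2) :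
    (pd2 G11 p = -2 * A p * G11 p ∧ pd1 G22 p = -2 * B p * G22 p) ∧
    gaussCurvature G11 G22 A B p = K ∧
    (pd2 k1 p / (k2 p - k1 p) = 1 / (p.1 - p.2) ∧
      pd1 k2 p / (k1 p - k2 p) = 1 / (p.2 - p.1)) := by
  obtain rfl : G11 = cyclidG11 Q1 := funext hG11
  obtain rfl : G22 = cyclidG22 Q2 := funext hG22
  obtain rfl := funext hQ1
  obtain rfl := funext hQ2
  obtain rfl : A = cyclidA := funext hA
  obtain rfl : B = cyclidB := funext hB
  obtain rfl : k1 = Prod.snd := funext hk1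
  obtain rfl : k2 = Prod.fst := funext hk2
  refine ⟨⟨pd2_cyclidG11_eq_cyclidA_mul (by fun_prop) hp,
    pd1_cyclidG22_eq_cyclidB_mul (by fun_prop) hp⟩, gaussCurvature_cyclid_quadratic a b c K hp, ?_⟩
  rw [pd2_snd, pd1_fst]
  exact ⟨rfl, rfl⟩

/-- For the metric of the cyclids of Dupin, with
`G¹¹ = (R¹ − R²)²Q₁(R¹)`, `G²² = −(R¹ − R²)²Q₂(R²)`,
`Q₁(t) = at² + bt + c`, `Q₂(t) = at² + bt + c + 1`:
(i) `A = 1/(R¹ − R²)`, `B = 1/(R² − R¹)`, independent of `a, b, c`;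
(ii) the constant-curvature-one condition holds for all `a, b, c`;
(iii) `k¹ = R²`, `k² = R¹` satisfy the corresponding Codazzi system. -/
theorem dupin_cyclids (a b c : ℝ) (Q1 Q2 : ℝ → ℝ)
    (hQ1 : ∀ t, Q1 t = a * t ^ 2 + b * t + c)
    (hQ2 : ∀ t, Q2 t = a * t ^ 2 + b * t + c + 1)
    (U : Set (ℝ × ℝ)) (hUopen : IsOpen U)
    (hU : ∀ p ∈ U, p.1 ≠ p.2 ∧ 0 < Q1 p.1 ∧ Q2 p.2 < 0)
    (G11 G22 A B k1 k2 : ℝ × ℝ → ℝ)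
    (hG11 : ∀ p : ℝ × ℝ, G11 p = (p.1 - p.2) ^ 2 * Q1 p.1)
    (hG22 : ∀ p : ℝ × ℝ, G22 p = -((p.1 - p.2) ^ 2 * Q2 p.2))
    (hA : ∀ p : ℝ × ℝ, A p = 1 / (p.1 - p.2))
    (hB : ∀ p : ℝ × ℝ, B p = 1 / (p.2 - p.1))
    (hk1 : ∀ p : ℝ × ℝ, k1 p = p.2)
    (hk2 : ∀ p : ℝ × ℝ, k2 p = p.1) :
    (∀ p ∈ U, pd2 G11 p = -2 * A p * G11 p ∧ pd1 G22 p = -2 * B p * G22 p) ∧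
    (∀ p ∈ U,
      (pd2 A p + A p ^ 2) * G22 p + A p / 2 * pd2 G22 p +
        (pd1 B p + B p ^ 2) * G11 p + B p / 2 * pd1 G11 p + 1 = 0) ∧
    (∀ p ∈ U,
      pd2 k1 p / (k2 p - k1 p) = 1 / (p.1 - p.2) ∧
      pd1 k2 p / (k1 p - k2 p) = 1 / (p.2 - p.1)) := by
  have cyclid (p) (hp : p ∈ U) := dupin_cyclids_general hQ1 hQ2 hG11 hG22 hA hB hk1 hk2 (hU p hp).1
  exact ⟨fun p hp => (cyclid p hp).1, fun p hp => gaussCurvature_eq_iff.1 (cyclid p hp).2.1,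
    fun p hp => (cyclid p hp).2.2⟩
end

section
/- Let H₁, H₂, β₁₂, β₂₁ be smooth functions on an open set U ⊆ ℝ², let η₁, η₂ be smooth functions of R¹, R² respectively, and suppose they satisfy system (4): ∂₁H₂ = β₁₂H₁, ∂₂H₁ = β₂₁H₂, ∂₁β₁₂ + ∂₂β₂₁ = 0, and η₁∂₁β₁₂ + η₂∂₂β₂₁ + (1/2)η₁′β₁₂ + (1/2)η₂′β₂₁ + H₁H₂ = 0. Fix λ ∈ ℝ with λ + η₁ > 0 and λ + η₂ > 0 on U, and define the 3×3 matrix-valued functions A₁ and A₂ by: A₁ has entries (A₁)₁₂ = −√((λ+η₂)/(λ+η₁)) β₂₁, (A₁)₂₁ = √((λ+η₂)/(λ+η₁)) β₂₁, (A₁)₁₃ = H₁/√(λ+η₁), (A₁)₃₁ = −H₁/√(λ+η₁), all other entries 0; A₂ has entries (A₂)₁₂ = √((λ+η₁)/(λ+η₂)) β₁₂, (A₂)₂₁ = −√((λ+η₁)/(λ+η₂)) β₁₂, (A₂)₂₃ = H₂/√(λ+η₂), (A₂)₃₂ = −H₂/√(λ+η₂), all other entries 0. Then the zero-curvature condition ∂₂A₁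 − ∂₁A₂ + A₁A₂ − A₂A₁ = 0 holds on U, i.e. the linear system ∂₁ψ = A₁ψ, ∂₂ψ = A₂ψ is compatible. -/
/-!
Dividing `g₁₁` and `g₂₂` by functions `u₁(R¹)` and `u₂(R²)` replaces the Lamé coefficients `Hᵢ` by
`Hᵢ / √uᵢ` and the rotation coefficients `β₁₂`, `β₂₁` by `√(u₁/u₂) β₁₂`, `√(u₂/u₁) β₂₁`.
Adding `λ` times the third equation of (4) to the fourth says that for `uᵢ = λ + ηᵢ` the new
coefficients satisfy the Gauss equation of the unit sphere. The curvature of the orthonormal frame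
connection is an antisymmetric matrix whose three independent entries are the Gauss equation and
the two equations relating Lamé and rotation coefficients.
-/

/-- The matrix of the orthonormal frame equations on the unit sphere along the first coordinate
line, with Lamé coefficient `h = h₁` and rotation coefficient `γ = γ₂₁`. The third frame vector is
the normal of the sphere. -/
def sphericalConnectionFst {R : Type*} [NegZeroClass R] (h γ : R) : Matrix (Fin 3) (Fin 3) R :=
  !![0, -γ, h; γ, 0, 0; -h, 0, 0]

/-- The matrix of the orthonormal frame equations on the unit sphere along the second coordinate
line, with Lamé coefficient `h = h₂` and rotation coefficient `γ = γ₁₂`. -/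
def sphericalConnectionSnd {R : Type*} [NegZeroClass R] (h γ : R) : Matrix (Fin 3) (Fin 3) R :=
  !![0, γ, 0; -γ, 0, h; 0, -h, 0]

theorem sphericalConnection_curvature {R : Type*} [CommRing R]
    (h₁ h₂ γ₁₂ γ₂₁ dh₁ dh₂ dγ₁₂ dγ₂₁ : R) :
    sphericalConnectionFst dh₁ dγ₂₁ - sphericalConnectionSnd dh₂ dγ₁₂ +
        sphericalConnectionFst h₁ γ₂₁ * sphericalConnectionSnd h₂ γ₁₂ -
        sphericalConnectionSnd h₂ γ₁₂ * sphericalConnectionFst h₁ γ₂₁ =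
      !![0, -(dγ₁₂ + dγ₂₁ + h₁ * h₂), dh₁ - γ₂₁ * h₂;
         dγ₁₂ + dγ₂₁ + h₁ * h₂, 0, -(dh₂ - γ₁₂ * h₁);
         -(dh₁ - γ₂₁ * h₂), dh₂ - γ₁₂ * h₁, 0] := by
  ext i j
  fin_cases i <;> fin_cases j <;>
    simp [sphericalConnectionFst, sphericalConnectionSnd] <;>
    ring

section Derivatives

variable {𝕜 E : Type*} [NontriviallyNormedField 𝕜] [NormedAddCommGroup E] [NormedSpace 𝕜 E]

theorem fderiv_sphericalConnectionFst (h γ : E → 𝕜) (p v : E) (i j : Fin 3) :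
    fderiv 𝕜 (fun q => sphericalConnectionFst (h q) (γ q) i j) p v =
      sphericalConnectionFst (fderiv 𝕜 h p v) (fderiv 𝕜 γ p v) i j := by
  fin_cases i <;> fin_cases j <;> simp [sphericalConnectionFst, fderiv_fun_neg]

theorem fderiv_sphericalConnectionSnd (h γ : E → 𝕜) (p v : E) (i j : Fin 3) :
    fderiv 𝕜 (fun q => sphericalConnectionSnd (h q) (γ q) i j) p v =
      sphericalConnectionSnd (fderiv 𝕜 h p v) (fderiv 𝕜 γ p v) i j := by
  fin_cases i <;> fin_cases j <;> simp [sphericalConnectionSnd, fderiv_fun_neg]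

theorem fderiv_div_apply_of_fderiv_eq_zero {f g : E → 𝕜} {p v : E}
    (hf : DifferentiableAt 𝕜 f p) (hg : DifferentiableAt 𝕜 g p) (hgp : g p ≠ 0)
    (hgv : fderiv 𝕜 g p v = 0) :
    fderiv 𝕜 (fun q => f q / g q) p v = fderiv 𝕜 f p v / g p := by
  have hinv := (hasDerivAt_inv hgp).comp_hasFDerivAt p hg.hasFDerivAt
  have hdiv : HasFDerivAt (fun q => f q / g q)
      (f p • (-(g p ^ 2)⁻¹ • fderiv 𝕜 g p) + (g p)⁻¹ • fderiv 𝕜 f p) p := by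
    simpa only [div_eq_mul_inv, Function.comp_apply] using hf.hasFDerivAt.fun_mul hinv
  rw [hdiv.fderiv]
  simp [hgv, div_eq_inv_mul]

theorem hasFDerivAt_const_add_comp_fst {η : 𝕜 → 𝕜} {p : 𝕜 × E} (c : 𝕜)
    (hη : DifferentiableAt 𝕜 η p.1) :
    HasFDerivAt (fun q : 𝕜 × E => c + η q.1)
      (deriv η p.1 • ContinuousLinearMap.fst 𝕜 𝕜 E) p :=
  (hη.hasDerivAt.comp_hasFDerivAt p hasFDerivAt_fst).const_add c

theorem hasFDerivAt_const_add_comp_snd {η : 𝕜 → 𝕜} {p : E × 𝕜} (c : 𝕜)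
    (hη : DifferentiableAt 𝕜 η p.2) :
    HasFDerivAt (fun q : E × 𝕜 => c + η q.2)
      (deriv η p.2 • ContinuousLinearMap.snd 𝕜 E 𝕜) p :=
  (hη.hasDerivAt.comp_hasFDerivAt p hasFDerivAt_snd).const_add c

end Derivatives

section SqrtDerivatives

variable {E : Type*} [NormedAddCommGroup E] [NormedSpace ℝ E] {p v : E}

theorem fderiv_div_sqrt_apply_of_fderiv_eq_zero {f u : E → ℝ}
    (hf : DifferentiableAt ℝ f p) (hu : DifferentiableAt ℝ u p) (hup : 0 < u p)
    (huv : fderiv ℝ u p v = 0) :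
    fderiv ℝ (fun q => f q / √(u q)) p v = fderiv ℝ f p v / √(u p) := by
  refine fderiv_div_apply_of_fderiv_eq_zero hf (hu.sqrt hup.ne') (Real.sqrt_pos.2 hup).ne' ?_
  simp [fderiv_sqrt hu hup.ne', huv]

theorem fderiv_sqrt_div_mul_apply_of_fderiv_eq_zero {a b f : E → ℝ}
    (ha : DifferentiableAt ℝ a p) (hb : DifferentiableAt ℝ b p) (hf : DifferentiableAt ℝ f p)
    (hap : 0 < a p) (hbp : 0 < b p) (hbv : fderiv ℝ b p v = 0) :
    fderiv ℝ (fun q => √(a q / b q) * f q) p v =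
      √(a p / b p) * (fderiv ℝ f p v + fderiv ℝ a p v / (2 * a p) * f p) := by
  have hab : 0 < a p / b p := div_pos hap hbp
  have hquot : DifferentiableAt ℝ (fun q => a q / b q) p := by
    simpa only [div_eq_mul_inv] using ha.fun_mul (hb.fun_inv hbp.ne')
  have hsqrt : fderiv ℝ (fun q => √(a q / b q)) p v =
      √(a p / b p) * (fderiv ℝ a p v / (2 * a p)) := by
    have hne : √(a p / b p) ≠ 0 := (Real.sqrt_pos.2 hab).ne'
    have hsq : √(a p / b p) ^ 2 = a p / b p := Real.sq_sqrt hab.le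
    rw [fderiv_sqrt hquot hab.ne', smul_apply, smul_eq_mul,
      fderiv_div_apply_of_fderiv_eq_zero ha hb hbp.ne' hbv]
    generalize √(a p / b p) = r at hne hsq ⊢
    rw [eq_div_iff hbp.ne'] at hsq
    field_simp
    linear_combination -(fderiv ℝ a p v) * hsq
  rw [fderiv_fun_mul (hquot.sqrt hab.ne') hf]
  simp only [add_apply, smul_apply, smul_eq_mul, hsqrt]
  ring

end SqrtDerivatives

theorem sqrt_div_eq_div_sqrt_mul_sqrt {a b : ℝ} (ha : 0 ≤ a) : √(a / b) = a / (√a * √b) := by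
  rw [Real.sqrt_div ha, div_mul_eq_div_div, Real.div_sqrt]

section SphericalLame

variable {E : Type*} [NormedAddCommGroup E] [NormedSpace ℝ E] {p v w : E}

/-- The Lamé system of orthogonal coordinates on the unit sphere, at a point `p`, for the Lamé
coefficients `h₁`, `h₂` and the rotation coefficients `γ₁₂ = ∂₁h₂ / h₁`, `γ₂₁ = ∂₂h₁ / h₂`. The
coordinate derivatives `∂₁` and `∂₂` are the derivatives in the directions `v` and `w`, and the
definition of the rotation coefficients is encoded without division. -/
structure IsSphericalLameAt (v w : E) (h₁ h₂ γ₁₂ γ₂₁ : E → ℝ) (p : E) : Prop where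
  fderiv_snd : fderiv ℝ h₂ p v = γ₁₂ p * h₁ p
  fderiv_fst : fderiv ℝ h₁ p w = γ₂₁ p * h₂ p
  gauss : fderiv ℝ γ₁₂ p v + fderiv ℝ γ₂₁ p w + h₁ p * h₂ p = 0

theorem IsSphericalLameAt.zero_curvature {h₁ h₂ γ₁₂ γ₂₁ : E → ℝ}
    (h : IsSphericalLameAt v w h₁ h₂ γ₁₂ γ₂₁ p) (i j : Fin 3) :
    fderiv ℝ (fun q => sphericalConnectionFst (h₁ q) (γ₂₁ q) i j) p w -
        fderiv ℝ (fun q => sphericalConnectionSnd (h₂ q) (γ₁₂ q) i j) p v +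
        (sphericalConnectionFst (h₁ p) (γ₂₁ p) * sphericalConnectionSnd (h₂ p) (γ₁₂ p)) i j -
        (sphericalConnectionSnd (h₂ p) (γ₁₂ p) * sphericalConnectionFst (h₁ p) (γ₂₁ p)) i j =
      0 := by
  have hcurv := sphericalConnection_curvature (h₁ p) (h₂ p) (γ₁₂ p) (γ₂₁ p)
    (fderiv ℝ h₁ p w) (fderiv ℝ h₂ p v) (fderiv ℝ γ₁₂ p v) (fderiv ℝ γ₂₁ p w)
  rw [h.gauss, sub_eq_zero.2 h.fderiv_fst, sub_eq_zero.2 h.fderiv_snd] at hcurv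
  rw [fderiv_sphericalConnectionFst, fderiv_sphericalConnectionSnd]
  refine (congr_fun₂ hcurv i j).trans ?_
  fin_cases i <;> fin_cases j <;> simp

theorem isSphericalLameAt_rescale {H₁ H₂ β₁₂ β₂₁ u₁ u₂ : E → ℝ}
    (hH₁ : DifferentiableAt ℝ H₁ p) (hH₂ : DifferentiableAt ℝ H₂ p)
    (hβ₁₂ : DifferentiableAt ℝ β₁₂ p) (hβ₂₁ : DifferentiableAt ℝ β₂₁ p)
    (hu₁ : DifferentiableAt ℝ u₁ p) (hu₂ : DifferentiableAt ℝ u₂ p)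
    (hu₁pos : 0 < u₁ p) (hu₂pos : 0 < u₂ p)
    (hu₁w : fderiv ℝ u₁ p w = 0) (hu₂v : fderiv ℝ u₂ p v = 0)
    (hH₂v : fderiv ℝ H₂ p v = β₁₂ p * H₁ p) (hH₁w : fderiv ℝ H₁ p w = β₂₁ p * H₂ p)
    (hgauss : u₁ p * fderiv ℝ β₁₂ p v + u₂ p * fderiv ℝ β₂₁ p w +
      (1 / 2) * fderiv ℝ u₁ p v * β₁₂ p + (1 / 2) * fderiv ℝ u₂ p w * β₂₁ p + H₁ p * H₂ p = 0) :
    IsSphericalLameAt v w (fun q => H₁ q / √(u₁ q)) (fun q => H₂ q / √(u₂ q))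
      (fun q => √(u₁ q / u₂ q) * β₁₂ q) (fun q => √(u₂ q / u₁ q) * β₂₁ q) p := by
  constructor
  · rw [fderiv_div_sqrt_apply_of_fderiv_eq_zero hH₂ hu₂ hu₂pos hu₂v, hH₂v,
      Real.sqrt_div hu₁pos.le]
    field_simp
  · rw [fderiv_div_sqrt_apply_of_fderiv_eq_zero hH₁ hu₁ hu₁pos hu₁w, hH₁w,
      Real.sqrt_div hu₂pos.le]
    field_simp
  · rw [fderiv_sqrt_div_mul_apply_of_fderiv_eq_zero hu₁ hu₂ hβ₁₂ hu₁pos hu₂pos hu₂v,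
      fderiv_sqrt_div_mul_apply_of_fderiv_eq_zero hu₂ hu₁ hβ₂₁ hu₂pos hu₁pos hu₁w,
      sqrt_div_eq_div_sqrt_mul_sqrt hu₁pos.le, sqrt_div_eq_div_sqrt_mul_sqrt hu₂pos.le]
    field_simp
    linear_combination 2 * hgauss

theorem lax_pair_zero_curvature_general {H₁ H₂ β₁₂ β₂₁ u₁ u₂ : E → ℝ}
    (hH₁ : DifferentiableAt ℝ H₁ p) (hH₂ : DifferentiableAt ℝ H₂ p)
    (hβ₁₂ : DifferentiableAt ℝ β₁₂ p) (hβ₂₁ : DifferentiableAt ℝ β₂₁ p)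
    (hu₁ : DifferentiableAt ℝ u₁ p) (hu₂ : DifferentiableAt ℝ u₂ p)
    (hu₁pos : 0 < u₁ p) (hu₂pos : 0 < u₂ p)
    (hu₁w : fderiv ℝ u₁ p w = 0) (hu₂v : fderiv ℝ u₂ p v = 0)
    (hH₂v : fderiv ℝ H₂ p v = β₁₂ p * H₁ p) (hH₁w : fderiv ℝ H₁ p w = β₂₁ p * H₂ p)
    (hgauss : u₁ p * fderiv ℝ β₁₂ p v + u₂ p * fderiv ℝ β₂₁ p w +
      (1 / 2) * fderiv ℝ u₁ p v * β₁₂ p + (1 / 2) * fderiv ℝ u₂ p w * β₂₁ p + H₁ p * H₂ p = 0)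
    {A₁ A₂ : E → Matrix (Fin 3) (Fin 3) ℝ}
    (hA₁ : ∀ q, A₁ q = sphericalConnectionFst (H₁ q / √(u₁ q)) (√(u₂ q / u₁ q) * β₂₁ q))
    (hA₂ : ∀ q, A₂ q = sphericalConnectionSnd (H₂ q / √(u₂ q)) (√(u₁ q / u₂ q) * β₁₂ q))
    (i j : Fin 3) :
    fderiv ℝ (fun q => A₁ q i j) p w - fderiv ℝ (fun q => A₂ q i j) p v +
        (A₁ p * A₂ p) i j - (A₂ p * A₁ p) i j = 0 := by
  simp only [hA₁, hA₂]
  exact (isSphericalLameAt_rescale hH₁ hH₂ hβ₁₂ hβ₂₁ hu₁ hu₂ hu₁pos hu₂pos hu₁w hu₂v hH₂v hH₁w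
    hgauss).zero_curvature i j

end SphericalLame

/-- Given a solution of system (4) and a spectral parameter `λ` with
`λ + η₁ > 0`, `λ + η₂ > 0` on `U`, the `3×3` matrices `A₁`, `A₂` of the Lax
pair satisfy the zero-curvature condition
`∂₂A₁ − ∂₁A₂ + A₁A₂ − A₂A₁ = 0`, i.e. the linear system
`∂₁ψ = A₁ψ`, `∂₂ψ = A₂ψ` is compatible. -/
theorem lax_pair_zero_curvature (U : Set (ℝ × ℝ)) (hUopen : IsOpen U)
    (H1 H2 β12 β21 : ℝ × ℝ → ℝ)
    (hH1 : ContDiffOn ℝ (⊤ : ℕ∞) H1 U) (hH2 : ContDiffOn ℝ (⊤ : ℕ∞) H2 U)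
    (hβ12 : ContDiffOn ℝ (⊤ : ℕ∞) β12 U) (hβ21 : ContDiffOn ℝ (⊤ : ℕ∞) β21 U)
    (η1 η2 : ℝ → ℝ) (hη1 : ContDiff ℝ (⊤ : ℕ∞) η1) (hη2 : ContDiff ℝ (⊤ : ℕ∞) η2)
    (h1 : ∀ p ∈ U, pd1 H2 p = β12 p * H1 p)
    (h2 : ∀ p ∈ U, pd2 H1 p = β21 p * H2 p)
    (h3 : ∀ p ∈ U, pd1 β12 p + pd2 β21 p = 0)
    (h4 : ∀ p ∈ U,
      η1 p.1 * pd1 β12 p + η2 p.2 * pd2 β21 p +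
        (1 / 2) * deriv η1 p.1 * β12 p + (1 / 2) * deriv η2 p.2 * β21 p +
        H1 p * H2 p = 0)
    (lam : ℝ)
    (hpos : ∀ p ∈ U, 0 < lam + η1 p.1 ∧ 0 < lam + η2 p.2)
    (A1 A2 : ℝ × ℝ → Matrix (Fin 3) (Fin 3) ℝ)
    (hA1 : ∀ p : ℝ × ℝ, A1 p =
      !![0, -(Real.sqrt ((lam + η2 p.2) / (lam + η1 p.1)) * β21 p),
           H1 p / Real.sqrt (lam + η1 p.1);
         Real.sqrt ((lam + η2 p.2) / (lam + η1 p.1)) * β21 p, 0, 0;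
         -(H1 p / Real.sqrt (lam + η1 p.1)), 0, 0])
    (hA2 : ∀ p : ℝ × ℝ, A2 p =
      !![0, Real.sqrt ((lam + η1 p.1) / (lam + η2 p.2)) * β12 p, 0;
         -(Real.sqrt ((lam + η1 p.1) / (lam + η2 p.2)) * β12 p), 0,
           H2 p / Real.sqrt (lam + η2 p.2);
         0, -(H2 p / Real.sqrt (lam + η2 p.2)), 0]) :
    ∀ p ∈ U, ∀ i j : Fin 3,
      pd2 (fun q => A1 q i j) p - pd1 (fun q => A2 q i j) p +
        (∑ k : Fin 3, A1 p i k * A2 p k j) -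
        (∑ k : Fin 3, A2 p i k * A1 p k j) = 0 := by
  intro p hp i j
  have differentiableAt_of_smooth {f : ℝ × ℝ → ℝ} (hf : ContDiffOn ℝ (⊤ : ℕ∞) f U) :
      DifferentiableAt ℝ f p :=
    (hf.contDiffAt (hUopen.mem_nhds hp)).differentiableAt (by simp)
  have hu₁ := hasFDerivAt_const_add_comp_fst (p := p) lam (hη1.differentiable (by simp) p.1)
  have hu₂ := hasFDerivAt_const_add_comp_snd (p := p) lam (hη2.differentiable (by simp) p.2)
  have hgauss : (lam + η1 p.1) * pd1 β12 p + (lam + η2 p.2) * pd2 β21 p +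
      (1 / 2) * deriv η1 p.1 * β12 p + (1 / 2) * deriv η2 p.2 * β21 p + H1 p * H2 p = 0 := by
    linear_combination h4 p hp + lam * h3 p hp
  exact lax_pair_zero_curvature_general (differentiableAt_of_smooth hH1)
    (differentiableAt_of_smooth hH2) (differentiableAt_of_smooth hβ12)
    (differentiableAt_of_smooth hβ21) hu₁.differentiableAt hu₂.differentiableAt
    (hpos p hp).1 (hpos p hp).2 (by simp [hu₁.fderiv]) (by simp [hu₂.fderiv])
    (h1 p hp) (h2 p hp) (by simpa [hu₁.fderiv, hu₂.fderiv, pd1, pd2] using hgauss) hA1 hA2 i j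
end

section
/- Let n ≥ 2, let c₁,…,cₙ be pairwise distinct real constants, let U ⊆ ℝⁿ be open, and let β_{ij} : U → ℝ (i ≠ j) be smooth functions satisfying system (S1): ∂_k β_{ij} = β_{ik}β_{kj} for all pairwise distinct i, j, k, and ∂ᵢβ_{ij} = Σ_{k≠i,j} ((c_k − c_j)/(c_j − cᵢ)) β_{ki}β_{kj} for all i ≠ j. Define Pᵢ = Σ_{k≠i} (c_k − cᵢ) β_{ki}² . Then ∂ⱼPᵢ = 0 on U for all j ≠ i; i.e. each Pᵢ is a function of the variable Rⁱ alone. -/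
/-- Partial derivative `∂ᵢ = ∂/∂Rⁱ` of a real function on `ℝⁿ`. -/
noncomputable def pdn {n : ℕ} (i : Fin n) (f : (Fin n → ℝ) → ℝ)
    (x : Fin n → ℝ) : ℝ :=
  fderiv ℝ f x (Pi.single i 1)

/-! Differentiating `Pᵢ` along `Rʲ`, the term `k = j` contributes `2(cⱼ − cᵢ)βⱼᵢ ∂ⱼβⱼᵢ`, where the
factor `cⱼ − cᵢ` cancels the denominator in the second equation of (S1). What is left is
`−2 Σ_{k≠i,j} (c_k − cᵢ) β_{kj} β_{ki} βⱼᵢ`, the negative of what the first equation of (S1) gives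
for the terms `k ≠ j`. -/

section

variable {ι 𝕜 E : Type*} [NontriviallyNormedField 𝕜] [NormedAddCommGroup E] [NormedSpace 𝕜 E]

theorem fderiv_sum_mul_sq_apply {s : Finset ι} {f : ι → E → 𝕜} {x : E}
    (hf : ∀ k ∈ s, DifferentiableAt 𝕜 (f k) x) (a : ι → 𝕜) (w : E) :
    fderiv 𝕜 (fun y => ∑ k ∈ s, a k * f k y ^ 2) x w =
      ∑ k ∈ s, a k * (2 * f k x * fderiv 𝕜 (f k) x w) := by
  have hsum : HasFDerivAt (fun y => ∑ k ∈ s, a k * f k y ^ 2)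
      (∑ k ∈ s, a k • ((2 • f k x ^ (2 - 1)) • fderiv 𝕜 (f k) x)) x :=
    HasFDerivAt.fun_sum fun k hk => ((hf k hk).hasFDerivAt.pow 2).const_mul (a k)
  simp [hsum.fderiv]

variable [Fintype ι] [DecidableEq ι]

/-- System (S1) for the rotation coefficients `β i j` at the point `x`, with the coordinate
derivative `∂ₖ` replaced by the derivative along an arbitrary vector `v k`. The diagonal entries
`β i i` are unconstrained, and the second equation is imposed only where its denominator does not
vanish. -/
structure IsSystemS1At (c : ι → 𝕜) (v : ι → E) (β : ι → ι → E → 𝕜) (x : E) : Prop where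
  differentiableAt : ∀ i j, i ≠ j → DifferentiableAt 𝕜 (β i j) x
  fderiv_apply_of_ne : ∀ i j k, i ≠ j → j ≠ k → i ≠ k →
    fderiv 𝕜 (β i j) x (v k) = β i k x * β k j x
  fderiv_apply_left : ∀ i j, c i ≠ c j →
    fderiv 𝕜 (β i j) x (v i) =
      ∑ k ∈ (Finset.univ.erase i).erase j, ((c k - c j) / (c j - c i)) * β k i x * β k j x

/-- The first integral `Pᵢ` of system (S1). -/
def firstIntegralS1 (c : ι → 𝕜) (β : ι → ι → E → 𝕜) (i : ι) (y : E) : 𝕜 :=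
  ∑ k ∈ Finset.univ.erase i, (c k - c i) * β k i y ^ 2

namespace IsSystemS1At

variable {c : ι → 𝕜} {v : ι → E} {β : ι → ι → E → 𝕜} {x : E} {i j : ι}

theorem sub_mul_fderiv_apply_left (h : IsSystemS1At c v β x) (hij : c i ≠ c j) :
    (c j - c i) * fderiv 𝕜 (β j i) x (v j) =
      -∑ k ∈ (Finset.univ.erase i).erase j, (c k - c i) * (β k j x * β k i x) := by
  have hne : c i - c j ≠ 0 := sub_ne_zero.mpr hij
  rw [h.fderiv_apply_left j i hij.symm, Finset.erase_right_comm, Finset.mul_sum,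
    ← Finset.sum_neg_distrib]
  refine Finset.sum_congr rfl fun k _ => ?_
  field_simp
  ring

theorem fderiv_firstIntegralS1_apply (h : IsSystemS1At c v β x) (hji : j ≠ i) :
    fderiv 𝕜 (firstIntegralS1 c β i) x (v j) =
      2 * β j i x * ((c j - c i) * fderiv 𝕜 (β j i) x (v j) +
        ∑ k ∈ (Finset.univ.erase i).erase j, (c k - c i) * (β k j x * β k i x)) := by
  have hdiff : ∀ k ∈ Finset.univ.erase i, DifferentiableAt 𝕜 (β k i) x := fun k hk =>
    h.differentiableAt k i (Finset.ne_of_mem_erase hk)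
  have hterm : ∀ k ∈ (Finset.univ.erase i).erase j,
      (c k - c i) * (2 * β k i x * fderiv 𝕜 (β k i) x (v j)) =
        2 * β j i x * ((c k - c i) * (β k j x * β k i x)) := by
    intro k hk
    obtain ⟨hkj, hki, -⟩ : k ≠ j ∧ k ≠ i ∧ k ∈ Finset.univ := by
      simpa only [Finset.mem_erase] using hk
    rw [h.fderiv_apply_of_ne k i j hki hji.symm hkj]
    ring
  calc fderiv 𝕜 (firstIntegralS1 c β i) x (v j)
      = ∑ k ∈ Finset.univ.erase i, (c k - c i) * (2 * β k i x * fderiv 𝕜 (β k i) x (v j)) :=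
        fderiv_sum_mul_sq_apply hdiff (fun k => c k - c i) (v j)
    _ = (c j - c i) * (2 * β j i x * fderiv 𝕜 (β j i) x (v j)) +
          ∑ k ∈ (Finset.univ.erase i).erase j,
            2 * β j i x * ((c k - c i) * (β k j x * β k i x)) := by
        rw [← Finset.add_sum_erase _ _ (Finset.mem_erase.mpr ⟨hji, Finset.mem_univ j⟩),
          Finset.sum_congr rfl hterm]
    _ = _ := by rw [← Finset.mul_sum]; ring

end IsSystemS1At

theorem system_S1_first_integrals_general {c : ι → 𝕜} {v : ι → E} {β : ι → ι → E → 𝕜} {x : E}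
    (h : IsSystemS1At c v β x) {i j : ι} (hij : c i ≠ c j) :
    fderiv 𝕜 (firstIntegralS1 c β i) x (v j) = 0 := by
  have hji : j ≠ i := ne_of_apply_ne c hij.symm
  rw [h.fderiv_firstIntegralS1_apply hji, h.sub_mul_fderiv_apply_left hij, neg_add_cancel, mul_zero]

end

/-- For a solution `β_{ij}` of system (S1) with pairwise distinct constants
`cᵢ`, the quantities `Pᵢ = Σ_{k≠i}(c_k − cᵢ)β_{ki}²` are first integrals:
`∂ⱼPᵢ = 0` for all `j ≠ i`, i.e. `Pᵢ` depends on `Rⁱ` alone. -/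
theorem system_S1_first_integrals (n : ℕ) (hn : 2 ≤ n)
    (c : Fin n → ℝ) (hc : ∀ i j : Fin n, i ≠ j → c i ≠ c j)
    (U : Set (Fin n → ℝ)) (hUopen : IsOpen U)
    (β : Fin n → Fin n → (Fin n → ℝ) → ℝ)
    (hβ : ∀ i j, i ≠ j → ContDiffOn ℝ (⊤ : ℕ∞) (β i j) U)
    (hS1a : ∀ i j k : Fin n, i ≠ j → j ≠ k → i ≠ k → ∀ x ∈ U,
      pdn k (β i j) x = β i k x * β k j x)
    (hS1b : ∀ i j : Fin n, i ≠ j → ∀ x ∈ U,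
      pdn i (β i j) x =
        ∑ k ∈ (Finset.univ.erase i).erase j,
          ((c k - c j) / (c j - c i)) * β k i x * β k j x) :
    ∀ i j : Fin n, j ≠ i → ∀ x ∈ U,
      pdn j (fun y => ∑ k ∈ Finset.univ.erase i, (c k - c i) * β k i y ^ 2) x
        = 0 := by
  intro i j hji x hx
  exact system_S1_first_integrals_general (v := fun k => Pi.single k 1)
    { differentiableAt := fun i j hij =>
        ((hβ i j hij).contDiffAt (hUopen.mem_nhds hx)).differentiableAt (by simp)
      fderiv_apply_of_ne := fun i j k hij hjk hik => hS1a i j k hij hjk hik x hx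
      fderiv_apply_left := fun i j hij => hS1b i j (ne_of_apply_ne c hij) x hx }
    (hc i j hji.symm)
end

section
/- Let p, q, r be smooth functions on an open set U ⊆ ℝ³ with coordinates (R¹,R²,R³) satisfying system (S2): ∂₁q = cos p, ∂₁r = −sin p, ∂₂p = −cosh q, ∂₂r = sinh q, ∂₃p = cos r, ∂₃q = sin r. Then at every point of U where sin p ≥ 0 and cos r ≥ 0, the function q satisfies the triple of Monge–Ampère equations: ∂₁∂₂q = cosh q · √(1 − (∂₁q)²), ∂₁∂₃q = −√(1 − (∂₁q)²) · √(1 − (∂₃q)²), and ∂₂∂₃q = sinh q · √(1 − (∂₃q)²). -/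
/-!
Differentiating `∂₃q = sin r` along `R¹` and `R²`, and `∂₁q = cos p` along `R²` (the second
derivatives of `q` being symmetric), expresses the mixed derivatives of `q` through first
derivatives of `p` and `r`, which (S2) gives as functions of `p`, `q`, `r`. Where `sin p` and
`cos r` are nonnegative, they are the square roots of `1 - (∂₁q)²` and `1 - (∂₃q)²`.
-/

open Filter Topology

section PartialDerivatives

variable {n : ℕ} {f g : (Fin n → ℝ) → ℝ} {x : Fin n → ℝ}

theorem pdn_congr (i : Fin n) (h : f =ᶠ[𝓝 x] g) : pdn i f x = pdn i g x := by
  rw [pdn, pdn, h.fderiv_eq]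

theorem pdn_comp (i : Fin n) {φ : ℝ → ℝ} {φ' : ℝ} (hφ : HasDerivAt φ φ' (f x))
    (hf : DifferentiableAt ℝ f x) : pdn i (fun y => φ (f y)) x = φ' * pdn i f x := by
  have hcomp : HasFDerivAt (fun y => φ (f y)) (φ' • fderiv ℝ f x) x :=
    hφ.comp_hasFDerivAt x hf.hasFDerivAt
  rw [pdn, hcomp.fderiv]
  rfl

theorem pdn_pdn_eq_fderiv_fderiv (i j : Fin n) (hf : DifferentiableAt ℝ (fderiv ℝ f) x) :
    pdn i (pdn j f) x = fderiv ℝ (fderiv ℝ f) x (Pi.single i 1) (Pi.single j 1) := by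
  have happly : HasFDerivAt (fun y => fderiv ℝ f y (Pi.single j 1))
      ((fderiv ℝ (fderiv ℝ f) x).flip (Pi.single j 1)) x := by
    simpa using hf.hasFDerivAt.clm_apply (hasFDerivAt_const (Pi.single j 1) x)
  unfold pdn
  rw [happly.fderiv, ContinuousLinearMap.flip_apply]

theorem pdn_comm (i j : Fin n) (hf : ContDiffAt ℝ 2 f x) :
    pdn i (pdn j f) x = pdn j (pdn i f) x := by
  have hdiff : DifferentiableAt ℝ (fderiv ℝ f) x :=
    (hf.fderiv_right (m := 1) (by norm_num)).differentiableAt one_ne_zero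
  rw [pdn_pdn_eq_fderiv_fderiv i j hdiff, pdn_pdn_eq_fderiv_fderiv j i hdiff]
  exact hf.isSymmSndFDerivAt (by simp) _ _

end PartialDerivatives

theorem system_S2_monge_ampere_general {n : ℕ} {i j k : Fin n} {p q r : (Fin n → ℝ) → ℝ}
    {x : Fin n → ℝ} (hp : DifferentiableAt ℝ p x) (hq : ContDiffAt ℝ 2 q x)
    (hr : DifferentiableAt ℝ r x)
    (hqi : ∀ᶠ y in 𝓝 x, pdn i q y = Real.cos (p y)) (hri : pdn i r x = -Real.sin (p x))
    (hpj : pdn j p x = -Real.cosh (q x)) (hrj : pdn j r x = Real.sinh (q x))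
    (hqk : ∀ᶠ y in 𝓝 x, pdn k q y = Real.sin (r y))
    (hsin : 0 ≤ Real.sin (p x)) (hcos : 0 ≤ Real.cos (r x)) :
    pdn i (pdn j q) x = Real.cosh (q x) * √(1 - pdn i q x ^ 2) ∧
      pdn i (pdn k q) x = -(√(1 - pdn i q x ^ 2) * √(1 - pdn k q x ^ 2)) ∧
      pdn j (pdn k q) x = Real.sinh (q x) * √(1 - pdn k q x ^ 2) := by
  have hsqrt_i : √(1 - pdn i q x ^ 2) = Real.sin (p x) := by
    rw [hqi.self_of_nhds, ← Real.abs_sin_eq_sqrt_one_sub_cos_sq, abs_of_nonneg hsin]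
  have hsqrt_k : √(1 - pdn k q x ^ 2) = Real.cos (r x) := by
    rw [hqk.self_of_nhds, ← Real.abs_cos_eq_sqrt_one_sub_sin_sq, abs_of_nonneg hcos]
  have hji : pdn j (pdn i q) x = -Real.sin (p x) * pdn j p x :=
    (pdn_congr j hqi).trans (pdn_comp j (Real.hasDerivAt_cos _) hp)
  have hk (l : Fin n) : pdn l (pdn k q) x = Real.cos (r x) * pdn l r x :=
    (pdn_congr l hqk).trans (pdn_comp l (Real.hasDerivAt_sin _) hr)
  rw [hsqrt_i, hsqrt_k, pdn_comm i j hq, hji, hk i, hk j, hpj, hri, hrj]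
  exact ⟨by ring, by ring, by ring⟩

/-- A solution `p, q, r` of system (S2): `∂₁q = cos p`, `∂₁r = −sin p`,
`∂₂p = −cosh q`, `∂₂r = sinh q`, `∂₃p = cos r`, `∂₃q = sin r`, yields (where
`sin p ≥ 0` and `cos r ≥ 0`) the triple of Monge–Ampère equations for `q`:
`∂₁∂₂q = cosh q √(1 − (∂₁q)²)`, `∂₁∂₃q = −√(1 − (∂₁q)²)√(1 − (∂₃q)²)`,
`∂₂∂₃q = sinh q √(1 − (∂₃q)²)`. -/
theorem system_S2_monge_ampere (U : Set (Fin 3 → ℝ)) (hUopen : IsOpen U)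
    (p q r : (Fin 3 → ℝ) → ℝ)
    (hp : ContDiffOn ℝ (⊤ : ℕ∞) p U) (hq : ContDiffOn ℝ (⊤ : ℕ∞) q U)
    (hr : ContDiffOn ℝ (⊤ : ℕ∞) r U)
    (h1 : ∀ x ∈ U, pdn 0 q x = Real.cos (p x))
    (h2 : ∀ x ∈ U, pdn 0 r x = -Real.sin (p x))
    (h3 : ∀ x ∈ U, pdn 1 p x = -Real.cosh (q x))
    (h4 : ∀ x ∈ U, pdn 1 r x = Real.sinh (q x))
    (h5 : ∀ x ∈ U, pdn 2 p x = Real.cos (r x))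
    (h6 : ∀ x ∈ U, pdn 2 q x = Real.sin (r x)) :
    ∀ x ∈ U, 0 ≤ Real.sin (p x) → 0 ≤ Real.cos (r x) →
      pdn 0 (fun y => pdn 1 q y) x
        = Real.cosh (q x) * Real.sqrt (1 - pdn 0 q x ^ 2) ∧
      pdn 0 (fun y => pdn 2 q y) x
        = -(Real.sqrt (1 - pdn 0 q x ^ 2) * Real.sqrt (1 - pdn 2 q x ^ 2)) ∧
      pdn 1 (fun y => pdn 2 q y) x
        = Real.sinh (q x) * Real.sqrt (1 - pdn 2 q x ^ 2) := by
  intro x hx hsin hcos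
  have hU : U ∈ 𝓝 x := hUopen.mem_nhds hx
  exact system_S2_monge_ampere_general ((hp.contDiffAt hU).differentiableAt (by simp))
    ((hq.contDiffAt hU).of_le (WithTop.coe_le_coe.mpr le_top))
    ((hr.contDiffAt hU).differentiableAt (by simp))
    (eventually_of_mem hU h1) (h2 x hx) (h3 x hx) (h4 x hx) (eventually_of_mem hU h6) hsin hcos
end
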